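/- For ψ ∈ ℝ, let R₂(ψ) be the 2×2 rotation matrix [[cos ψ, −sin ψ], [sin ψ, cos ψ]], S_p the 2×2 matrix [[0, −1], [1, 0]], S_{T_p} the 6×6 matrix whose top-left 2×2 block equals S_pᵀ and whose other entries are 0, A_{0,p} the 6×6 block matrix whose (rows 1–2, columns 3–4) and (rows 3–4, columns 5–6) blocks are I₂ and whose other entries are 0, C_p the 2×6 matrix [I₂ 0 0], and B_{ω,p} the 6×2 matrix whose bottom 2×2 block is I₂ and whose other entries are 0. Let P be a symmetric positive-definite real 6×6 matrix, W a real 6×2 matrix, and r_min ≤ r_max real numbers such that both matrices A_{0,p}ᵀ·P + P·A_{0,p} + C_pᵀ·Wᵀ + W·C_p + r_i·(S_{T_p}ᵀ·P + P·S_{T_p}) + I₆, for r_i ∈ {r_min, r_max}, are negative semidefinite. Let r : ℝ → ℝ satisfy r(t) ∈ [r_min, r_max] for all t, let ψ : ℝ → ℝ, ω : ℝ → ℝ², n : ℝ → ℝ², and let z : ℝ → ℝ⁶ be differentiable with z'(t) = (A_{0,p} + r(t)·S_{T_p} + P⁻¹·W·C_p)·z(t) + B_{ω,p}·ω(t) +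 P⁻¹·W·R₂(ψ(t))ᵀ·n(t) for all t. Then for every t, the function V(s) := (1/2)·z(s)ᵀ·P·z(s) is differentiable at t and its derivative at t is at most −(1/2)·‖z(t)‖² + ‖z(t)‖·(‖P·B_{ω,p}‖·‖ω(t)‖ + ‖W‖·‖n(t)‖), where vector norms are Euclidean and ‖P·B_{ω,p}‖ and ‖W‖ are the ℓ²→ℓ² operator norms of those 6×2 matrices. -/

import Mathlib

/-!
Since `P` is symmetric, the derivative of `V = ½ zᵀPz` is `zᵀPz'`, and `P P⁻¹ = 1` turns this into
`zᵀ(P A₀ + r P S + W C)z + zᵀ(P B)ω + zᵀW(Rᵀn)` (`mulVec_dynamics`). The quadratic term is half of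
`zᵀM(r)z`, where `M(r)` is the symmetrised matrix of the LMIs (without the identity). As
`r ↦ zᵀM(r)z` is affine, the bound `zᵀM(r)z ≤ -‖z‖²` at the two end points extends to the whole
interval (`affine_le_of_endpoints`). The two input terms are bounded by Cauchy–Schwarz and the
operator norm (`dotProduct_mulVec_le`), and the rotation `Rᵀ` preserves the norm.
-/

open Matrix

/-- The Euclidean norm of a vector in `ℝⁿ`. -/
noncomputable def euclNorm {n : ℕ} (x : Fin n → ℝ) : ℝ := Real.sqrt (∑ i, x i ^ 2)

/-- The `ℓ²→ℓ²` operator norm (largest singular value) of a real matrix. -/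
noncomputable def matOpNorm {n m : ℕ} (M : Matrix (Fin n) (Fin m) ℝ) : ℝ :=
  ‖LinearMap.toContinuousLinearMap (Matrix.toEuclideanLin M)‖

/-- The planar rotation matrix `R₂(ψ)`. -/
noncomputable def R2 (ψ : ℝ) : Matrix (Fin 2) (Fin 2) ℝ :=
  !![Real.cos ψ, -Real.sin ψ; Real.sin ψ, Real.cos ψ]

/-- The 6×6 matrix `S_{T_p}` whose top-left 2×2 block is `S_pᵀ = [[0,1],[−1,0]]`
and whose other entries are 0. -/
def STp : Matrix (Fin 6) (Fin 6) ℝ :=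
  !![0, 1, 0, 0, 0, 0;
     -1, 0, 0, 0, 0, 0;
     0, 0, 0, 0, 0, 0;
     0, 0, 0, 0, 0, 0;
     0, 0, 0, 0, 0, 0;
     0, 0, 0, 0, 0, 0]

/-- The constant matrix `A_{0,p}`: its (rows 1–2, columns 3–4) and
(rows 3–4, columns 5–6) blocks are `I₂`, all other entries are 0. -/
def A0p : Matrix (Fin 6) (Fin 6) ℝ :=
  !![0, 0, 1, 0, 0, 0;
     0, 0, 0, 1, 0, 0;
     0, 0, 0, 0, 1, 0;
     0, 0, 0, 0, 0, 1;
     0, 0, 0, 0, 0, 0;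
     0, 0, 0, 0, 0, 0]

/-- The positional output matrix `C_p = [I₂ 0 0]`. -/
def Cp : Matrix (Fin 2) (Fin 6) ℝ :=
  !![1, 0, 0, 0, 0, 0;
     0, 1, 0, 0, 0, 0]

/-- The positional disturbance input matrix `B_{ω,p}`: its bottom 2×2 block is
`I₂`, all other entries are 0. -/
def Bωp : Matrix (Fin 6) (Fin 2) ℝ :=
  !![0, 0;
     0, 0;
     0, 0;
     0, 0;
     1, 0;
     0, 1]

theorem euclNorm_eq {n : ℕ} (x : Fin n → ℝ) : euclNorm x = ‖WithLp.toLp 2 x‖ := by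
  simp [euclNorm, EuclideanSpace.norm_eq]

theorem euclNorm_sq {n : ℕ} (x : Fin n → ℝ) : euclNorm x ^ 2 = x ⬝ᵥ x := by
  rw [euclNorm, Real.sq_sqrt (Finset.sum_nonneg fun i _ => sq_nonneg _)]
  simp [dotProduct, sq]

/-- Cauchy–Schwarz combined with the operator norm bound. -/
theorem dotProduct_mulVec_le {n m : ℕ} (M : Matrix (Fin n) (Fin m) ℝ)
    (x : Fin n → ℝ) (v : Fin m → ℝ) :
    x ⬝ᵥ M *ᵥ v ≤ euclNorm x * (matOpNorm M * euclNorm v) := by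
  have h1 : x ⬝ᵥ M *ᵥ v ≤ euclNorm x * euclNorm (M *ᵥ v) := by
    have := real_inner_le_norm (WithLp.toLp 2 (M *ᵥ v)) (WithLp.toLp 2 x)
    rw [EuclideanSpace.inner_toLp_toLp] at this
    rw [euclNorm_eq, euclNorm_eq, mul_comm]
    simpa using this
  have h2 : euclNorm (M *ᵥ v) ≤ matOpNorm M * euclNorm v := by
    have := (LinearMap.toContinuousLinearMap (Matrix.toEuclideanLin M)).le_opNorm
      (WithLp.toLp 2 v)
    rw [euclNorm_eq, euclNorm_eq, matOpNorm]
    simpa [Matrix.toLpLin_apply] using this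
  exact h1.trans (mul_le_mul_of_nonneg_left h2 (Real.sqrt_nonneg _))

theorem euclNorm_R2_transpose (ψ : ℝ) (v : Fin 2 → ℝ) :
    euclNorm ((R2 ψ)ᵀ *ᵥ v) = euclNorm v := by
  unfold euclNorm
  congr 1
  simp [R2, Matrix.mulVec, dotProduct, Fin.sum_univ_two]
  linear_combination (v 0 ^ 2 + v 1 ^ 2) * Real.sin_sq_add_cos_sq ψ

/-- An affine function bounded by `c` at both ends of an interval is bounded by `c` on it. -/
theorem affine_le_of_endpoints {a b c p q r : ℝ} (hp : a + p * b ≤ c) (hq : a + q * b ≤ c)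
    (hr : r ∈ Set.Icc p q) : a + r * b ≤ c := by
  rcases le_total 0 b with hb | hb
  · linarith [mul_le_mul_of_nonneg_right hr.2 hb]
  · linarith [mul_le_mul_of_nonpos_right hr.1 hb]

/-- The quadratic form of `AᵀP + PA` is twice that of `PA` when `P` is symmetric, and likewise
that of `CᵀWᵀ + WC` is twice that of `WC`; so the LMI at `r` bounds `zᵀ(PA + WC)z + r zᵀ(PS)z`. -/
theorem lmi_quadratic_le {k m : ℕ} {P A S : Matrix (Fin k) (Fin k) ℝ} {W : Matrix (Fin k) (Fin m) ℝ}
    {C : Matrix (Fin m) (Fin k) ℝ} {r : ℝ} (hP : Pᵀ = P)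
    (h : (-(Aᵀ * P + P * A + Cᵀ * Wᵀ + W * C + r • (Sᵀ * P + P * S) + 1)).PosSemidef)
    (x : Fin k → ℝ) :
    x ⬝ᵥ (P * A + W * C) *ᵥ x + r * (x ⬝ᵥ (P * S) *ᵥ x) ≤ -(1 / 2) * euclNorm x ^ 2 := by
  have ht : ∀ M : Matrix (Fin k) (Fin k) ℝ, x ⬝ᵥ Mᵀ *ᵥ x = x ⬝ᵥ M *ᵥ x := fun M => by
    rw [Matrix.mulVec_transpose, dotProduct_comm, Matrix.dotProduct_mulVec]
  have hA := ht (P * A)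
  have hS := ht (P * S)
  have hC := ht (W * C)
  rw [Matrix.transpose_mul] at hA hS hC
  rw [hP] at hA hS
  have h0 := h.dotProduct_mulVec_nonneg x
  simp only [star_trivial, Matrix.neg_mulVec, Matrix.add_mulVec, Matrix.smul_mulVec,
    Matrix.one_mulVec, dotProduct_neg, dotProduct_add, dotProduct_smul, smul_eq_mul,
    hA, hS, hC] at h0
  rw [euclNorm_sq, Matrix.add_mulVec, dotProduct_add]
  linarith

/-- The derivative of `½ zᵀPz` along a differentiable curve, for symmetric `P`. -/
theorem hasDerivAt_half_quadratic {k : ℕ} {P : Matrix (Fin k) (Fin k) ℝ} (hP : Pᵀ = P)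
    {z : ℝ → Fin k → ℝ} {z' : Fin k → ℝ} {t : ℝ} (hz : HasDerivAt z z' t) :
    HasDerivAt (fun s => (1 / 2) * (z s ⬝ᵥ P *ᵥ z s)) (z t ⬝ᵥ P *ᵥ z') t := by
  have hzi := hasDerivAt_pi.1 hz
  have hPz : ∀ i, HasDerivAt (fun s => (P *ᵥ z s) i) ((P *ᵥ z') i) t := fun i =>
    HasDerivAt.fun_sum (u := Finset.univ) fun j _ => (hzi j).const_mul (P i j)
  have h : HasDerivAt (fun s => z s ⬝ᵥ P *ᵥ z s) (z' ⬝ᵥ P *ᵥ z t + z t ⬝ᵥ P *ᵥ z') t := by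
    have := HasDerivAt.fun_sum (u := Finset.univ) fun i _ => (hzi i).mul (hPz i)
    rw [Finset.sum_add_distrib] at this
    exact this
  have hsymm : z' ⬝ᵥ P *ᵥ z t = z t ⬝ᵥ P *ᵥ z' := by
    rw [Matrix.dotProduct_mulVec, ← Matrix.mulVec_transpose, hP, dotProduct_comm]
  rw [hsymm] at h
  have hhalf := h.const_mul (1 / 2 : ℝ)
  rwa [← two_mul, one_div, inv_mul_cancel_left₀ two_ne_zero, ← one_div] at hhalf

/-- Multiplying the error dynamics by `P` cancels every `P⁻¹`. -/
theorem mulVec_dynamics {k m l : ℕ} {P A S : Matrix (Fin k) (Fin k) ℝ}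
    {W : Matrix (Fin k) (Fin m) ℝ} {C : Matrix (Fin m) (Fin k) ℝ} {B : Matrix (Fin k) (Fin l) ℝ}
    {R : Matrix (Fin m) (Fin m) ℝ} (hP : P.PosDef) (r : ℝ)
    (x : Fin k → ℝ) (w : Fin l → ℝ) (n : Fin m → ℝ) :
    P *ᵥ ((A + r • S + P⁻¹ * W * C) *ᵥ x + B *ᵥ w + (P⁻¹ * W * R) *ᵥ n) =
      (P * A + W * C) *ᵥ x + r • (P * S) *ᵥ x + (P * B) *ᵥ w + W *ᵥ (R *ᵥ n) := by
  have hdet : IsUnit P.det := (Matrix.isUnit_iff_isUnit_det P).1 hP.isUnit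
  have hC : P * (P⁻¹ * W * C) = W * C := by
    rw [Matrix.mul_assoc, Matrix.mul_nonsing_inv_cancel_left _ _ hdet]
  have hR : P * (P⁻¹ * W * R) = W * R := by
    rw [Matrix.mul_assoc, Matrix.mul_nonsing_inv_cancel_left _ _ hdet]
  simp only [Matrix.mulVec_add, Matrix.mulVec_mulVec, Matrix.mulVec_smul, hC, hR,
    Matrix.add_mulVec, Matrix.smul_mulVec]
  abel

/-- Lyapunov decrease bound (eqs. (43)–(45), with `k_{ω,p} = k_{n,p} = 1`) in
the proof of Theorem 2. -/
theorem stmt_14 (P : Matrix (Fin 6) (Fin 6) ℝ) (hP : P.PosDef)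
    (W : Matrix (Fin 6) (Fin 2) ℝ) (rmin rmax : ℝ) (hr : rmin ≤ rmax)
    (hLMImin : (-(A0pᵀ * P + P * A0p + Cpᵀ * Wᵀ + W * Cp
      + rmin • (STpᵀ * P + P * STp) + 1)).PosSemidef)
    (hLMImax : (-(A0pᵀ * P + P * A0p + Cpᵀ * Wᵀ + W * Cp
      + rmax • (STpᵀ * P + P * STp) + 1)).PosSemidef)
    (r : ℝ → ℝ) (hrt : ∀ t, r t ∈ Set.Icc rmin rmax)
    (ψ : ℝ → ℝ) (ω : ℝ → Fin 2 → ℝ) (n : ℝ → Fin 2 → ℝ)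
    (z : ℝ → Fin 6 → ℝ)
    (hz : ∀ t, HasDerivAt z
      ((A0p + r t • STp + P⁻¹ * W * Cp).mulVec (z t)
        + Bωp.mulVec (ω t) + (P⁻¹ * W * (R2 (ψ t))ᵀ).mulVec (n t)) t) :
    ∀ t, DifferentiableAt ℝ (fun s => (1 / 2) * (z s ⬝ᵥ P.mulVec (z s))) t ∧
      deriv (fun s => (1 / 2) * (z s ⬝ᵥ P.mulVec (z s))) t
        ≤ -(1 / 2) * euclNorm (z t) ^ 2
          + euclNorm (z t) * (matOpNorm (P * Bωp) * euclNorm (ω t)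
            + matOpNorm W * euclNorm (n t)) := by
  intro t
  have hPt : Pᵀ = P := by simpa using hP.isHermitian.eq
  have hd := hasDerivAt_half_quadratic hPt (hz t)
  refine ⟨hd.differentiableAt, ?_⟩
  rw [hd.deriv, mulVec_dynamics hP]
  simp only [dotProduct_add, dotProduct_smul, smul_eq_mul]
  have hquad := affine_le_of_endpoints (lmi_quadratic_le hPt hLMImin (z t))
    (lmi_quadratic_le hPt hLMImax (z t)) (hrt t)
  have hω := dotProduct_mulVec_le (P * Bωp) (z t) (ω t)
  have hn := dotProduct_mulVec_le W (z t) ((R2 (ψ t))ᵀ *ᵥ n t)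
  rw [euclNorm_R2_transpose] at hn
  linarith
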